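/- arXiv:2510.21594 — 3 statements merged into one kernel-verified Lean document; each statement's English description precedes it below -/
import Mathlib

section
/- Let k be a field, m ≥ 0 an integer, n_0,…,n_m integers with each n_i ≥ 2, r,s ≥ 2 coprime integers, and ψ ∈ k[u] a polynomial with ψ(0) ≠ 0. Then the k-algebra R_m(n̲,ψ) = k[x_0,…,x_m,y,z,t]/(x_0^{n_0}⋯x_m^{n_m}·z + y^r + t^s + x_0·ψ(x_0⋯x_m)) is a smooth k-algebra (formally smooth and of finite presentation over k). -/
open MvPolynomial

/-!
A derivation `D` for which `f` and `D f` are coprime yields a derivation `P → (f)/(f²)`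
restricting to the canonical map on `(f)`. Subtracting it from `P → P/(f²)` gives a
section of `P/(f²) → P/(f)`, so `P/(f)` is formally smooth when `P` is.

For `f = xⁿ z + g + x_j ψ(∏ x_i)` with `g` free of `x_j` and `z`, one has `∂f/∂z = xⁿ`, while
`∂f/∂x_j ≡ ψ(0)` modulo every `x_i` that occurs in `xⁿ`. These two partial derivatives are therefore
coprime, so some combination of `∂/∂z` and `∂/∂x_j` sends `f` to `1`.
-/

section FormallySmooth

variable {R P : Type*} [CommRing R] [CommRing P] [Algebra R P] [Algebra.FormallySmooth R P]

theorem formallySmooth_quotient_of_derivation_cotangentIdeal {I : Ideal P}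
    (d : Derivation R P I.cotangentIdeal)
    (hd : ∀ a ∈ I, (d a : P ⧸ I ^ 2) = Ideal.Quotient.mk (I ^ 2) a) :
    Algebra.FormallySmooth R (P ⧸ I) := by
  let lift : P →ₐ[R] P ⧸ I ^ 2 :=
    liftOfDerivationToSquareZero I.cotangentIdeal I.cotangentIdeal_square (-d)
  have lift_apply (p : P) : lift p = -(d p : P ⧸ I ^ 2) + Ideal.Quotient.mk (I ^ 2) p := rfl
  have lift_eq_zero (a : P) (ha : a ∈ I) : lift a = 0 := by
    rw [lift_apply, hd a ha, neg_add_cancel]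
  let π : P →ₐ[R] P ⧸ I := Ideal.Quotient.mkₐ R I
  have sq_le : I ^ 2 ≤ RingHom.ker π.toRingHom ^ 2 :=
    Ideal.pow_right_mono (Ideal.mk_ker (I := I)).ge 2
  refine Algebra.FormallySmooth.of_split π
    ((Ideal.Quotient.factorₐ R sq_le).comp (Ideal.Quotient.liftₐ I lift lift_eq_zero)) ?_
  refine Ideal.Quotient.algHom_ext _ (AlgHom.ext fun p => ?_)
  obtain ⟨a, ha, mk_sq_a⟩ : ∃ a ∈ I, Ideal.Quotient.mk (I ^ 2) a = (d p : P ⧸ I ^ 2) :=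
    (d p).2
  have lift_eq : lift p = Ideal.Quotient.mk (I ^ 2) (p - a) := by
    rw [lift_apply, ← mk_sq_a, map_sub, neg_add_eq_sub]
  have mk_a : Ideal.Quotient.mk I a = 0 := Ideal.Quotient.eq_zero_iff_mem.2 ha
  calc π.kerSquareLift (Ideal.Quotient.factorₐ R sq_le (lift p))
      = Ideal.Quotient.mk I (p - a) := by rw [lift_eq]; rfl
    _ = Ideal.Quotient.mk I p := by rw [map_sub, mk_a, sub_zero]

theorem formallySmooth_quotient_span_singleton_of_isCoprime {f : P} (D : Derivation R P P)
    (h : IsCoprime f (D f)) : Algebra.FormallySmooth R (P ⧸ Ideal.span {f}) := by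
  obtain ⟨a, b, hab⟩ := h
  let I := Ideal.span {f}
  let fbar : I.cotangentIdeal :=
    ⟨Ideal.Quotient.mk (I ^ 2) f, Ideal.mk_mem_cotangentIdeal.2 (Ideal.mem_span_singleton_self f)⟩
  refine formallySmooth_quotient_of_derivation_cotangentIdeal
    ((LinearMap.toSpanSingleton P I.cotangentIdeal fbar).compDer (b • D)) fun p hp => ?_
  obtain ⟨c, rfl⟩ := Ideal.mem_span_singleton'.1 hp
  change Ideal.Quotient.mk (I ^ 2) (b * D (c * f) * f) = Ideal.Quotient.mk (I ^ 2) (c * f)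
  rw [Ideal.Quotient.mk_eq_mk_iff_sub_mem, Ideal.span_singleton_pow, Ideal.mem_span_singleton]
  refine ⟨b * D c - c * a, ?_⟩
  rw [D.leibniz, smul_eq_mul, smul_eq_mul]
  linear_combination c * f * hab

theorem formallySmooth_quotient_span_singleton_of_isCoprime_derivations {f : P}
    (D E : Derivation R P P) (h : IsCoprime (D f) (E f)) :
    Algebra.FormallySmooth R (P ⧸ Ideal.span {f}) := by
  obtain ⟨a, b, hab⟩ := h
  have map_f : (a • D + b • E) f = 1 := by simpa using hab
  exact formallySmooth_quotient_span_singleton_of_isCoprime (a • D + b • E)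
    (map_f ▸ isCoprime_one_right)

end FormallySmooth

section Derivation

variable {R A : Type*} [CommRing R] [CommRing A] [Algebra R A] (D : Derivation R A A) {x p : A}

theorem dvd_derivation_of_apply_eq_zero (hx : D x = 0) (h : x ∣ p) : x ∣ D p := by
  obtain ⟨c, rfl⟩ := h
  simp [hx]

theorem pow_dvd_derivation_of_pow_succ_dvd {n : ℕ} (h : x ^ (n + 1) ∣ p) : x ^ n ∣ D p := by
  obtain ⟨c, rfl⟩ := h
  refine ⟨x * D c + (n + 1) * c * D x, ?_⟩
  simp only [D.leibniz, D.leibniz_pow, smul_eq_mul, nsmul_eq_mul, Nat.add_sub_cancel]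
  push_cast
  ring

theorem derivation_prod_pow_eq_zero {ι : Type*} {s : Finset ι} {x : ι → A} (n : ι → ℕ)
    (h : ∀ i ∈ s, D (x i) = 0) : D (∏ i ∈ s, x i ^ n i) = 0 :=
  Finset.prod_induction _ (D · = 0) (fun a b ha hb => by simp [ha, hb]) D.map_one_eq_zero
    fun i hi => by simp [D.leibniz_pow, h i hi]

end Derivation

theorem dvd_aeval_sub_algebraMap_eval_zero {R A : Type*} [CommRing R] [CommRing A] [Algebra R A]
    {x y : A} (h : x ∣ y) (ψ : Polynomial R) :
    x ∣ Polynomial.aeval y ψ - algebraMap R A (ψ.eval 0) := by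
  have hy := Polynomial.sub_dvd_eval_sub y 0 (ψ.map (algebraMap R A))
  rw [sub_zero, Polynomial.eval_map_algebraMap, Polynomial.eval_zero_map] at hy
  exact h.trans hy

theorem isCoprime_of_dvd_sub_of_isUnit {A : Type*} [CommRing A] {x p u : A} (h : x ∣ p - u)
    (hu : IsUnit u) : IsCoprime x p := by
  obtain ⟨c, hc⟩ := h
  rw [sub_eq_iff_eq_add'.1 hc]
  exact (isCoprime_one_right.of_isCoprime_of_dvd_right hu.dvd).add_mul_left_right c

section KorasRussell

variable {R A ι : Type*} [CommRing R] [CommRing A] [Algebra R A] [Fintype ι]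

/-- The defining equation `xⁿ z + g + x_j ψ(∏ x_i)` of a Koras–Russell hypersurface, for elements of
an arbitrary algebra. The summand `g` plays the role of `y ^ r + t ^ s`, and the index `j` that
of `0`. -/
noncomputable def korasRussellEquation (x : ι → A) (j : ι) (n : ι → ℕ) (z g : A)
    (ψ : Polynomial R) : A :=
  (∏ i, x i ^ n i) * z + g + x j * Polynomial.aeval (∏ i, x i) ψ

variable (D : Derivation R A A) {x : ι → A} {j : ι} {n : ι → ℕ} {z g : A} {ψ : Polynomial R}

theorem derivation_korasRussellEquation_eq_prod_pow (hx : ∀ i, D (x i) = 0) (hz : D z = 1)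
    (hg : D g = 0) : D (korasRussellEquation x j n z g ψ) = ∏ i, x i ^ n i := by
  have map_monomial : D (∏ i, x i ^ n i) = 0 := derivation_prod_pow_eq_zero D n fun i _ => hx i
  have map_prod : D (∏ i, x i) = 0 := by
    simpa using derivation_prod_pow_eq_zero D (fun _ => 1) fun i _ => hx i
  simp [korasRussellEquation, D.map_aeval, map_monomial, map_prod, hx, hz, hg]

theorem dvd_derivation_korasRussellEquation_sub_algebraMap (hn : n j ≠ 1) (hxj : D (x j) = 1)
    (hx : ∀ i ≠ j, D (x i) = 0) (hg : D g = 0) {i : ι} (hi : n i ≠ 0) :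
    x i ∣ D (korasRussellEquation x j n z g ψ) - algebraMap R A (ψ.eval 0) := by
  have pow_dvd : x i ^ n i ∣ (∏ l, x l ^ n l) * z :=
    (Finset.dvd_prod_of_mem (fun l => x l ^ n l) (Finset.mem_univ i)).mul_right z
  have dvd_prod : x i ∣ ∏ l, x l := Finset.dvd_prod_of_mem x (Finset.mem_univ i)
  have dvd_first : x i ∣ D ((∏ l, x l ^ n l) * z) := by
    by_cases hij : i = j
    · subst hij
      have sq_dvd : x i ^ (1 + 1) ∣ (∏ l, x l ^ n l) * z :=
        (pow_dvd_pow _ (by lia)).trans pow_dvd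
      simpa using pow_dvd_derivation_of_pow_succ_dvd D sq_dvd
    · exact dvd_derivation_of_apply_eq_zero D (hx i hij) ((dvd_pow_self _ hi).trans pow_dvd)
  have dvd_mul_prod : x i ∣ x j * D (∏ l, x l) := by
    by_cases hij : i = j
    · exact hij ▸ dvd_mul_right _ _
    · exact (dvd_derivation_of_apply_eq_zero D (hx i hij) dvd_prod).mul_left _
  have map_eq : D (korasRussellEquation x j n z g ψ) - algebraMap R A (ψ.eval 0) =
      D ((∏ l, x l ^ n l) * z) +
        x j * D (∏ l, x l) * Polynomial.aeval (∏ l, x l) ψ.derivative +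
        (Polynomial.aeval (∏ l, x l) ψ - algebraMap R A (ψ.eval 0)) := by
    rw [korasRussellEquation, map_add, map_add, hg, D.leibniz (x j), D.map_aeval, hxj]
    simp only [smul_eq_mul]
    ring
  rw [map_eq]
  exact (dvd_first.add (dvd_mul_prod.mul_right _)).add
    (dvd_aeval_sub_algebraMap_eval_zero dvd_prod ψ)

theorem isCoprime_prod_pow_derivation_korasRussellEquation (hn : n j ≠ 1) (hxj : D (x j) = 1)
    (hx : ∀ i ≠ j, D (x i) = 0) (hg : D g = 0) (hψ : IsUnit (ψ.eval 0)) :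
    IsCoprime (∏ i, x i ^ n i) (D (korasRussellEquation x j n z g ψ)) := by
  refine IsCoprime.prod_left fun i _ => ?_
  by_cases hi : n i = 0
  · rw [hi, pow_zero]
    exact isCoprime_one_left
  · exact (isCoprime_of_dvd_sub_of_isUnit
      (dvd_derivation_korasRussellEquation_sub_algebraMap D hn hxj hx hg hi)
      (hψ.map (algebraMap R A))).pow_left

end KorasRussell

theorem generalized_koras_russell_algebra_smooth_general {R ι κ : Type*} [CommRing R] [Fintype ι]
    [Finite κ] (j : ι) (l : κ) (n : ι → ℕ) (hn : n j ≠ 1) (g : MvPolynomial (ι ⊕ κ) R)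
    (hgj : pderiv (Sum.inl j) g = 0) (hgl : pderiv (Sum.inr l) g = 0)
    (ψ : Polynomial R) (hψ : IsUnit (ψ.eval 0)) :
    Algebra.Smooth R (MvPolynomial (ι ⊕ κ) R ⧸
      Ideal.span {korasRussellEquation (fun i => X (Sum.inl i)) j n (X (Sum.inr l)) g ψ}) where
  formallySmooth := by
    refine formallySmooth_quotient_span_singleton_of_isCoprime_derivations
      (pderiv (Sum.inr l)) (pderiv (Sum.inl j)) ?_
    rw [derivation_korasRussellEquation_eq_prod_pow _
      (fun i => pderiv_X_of_ne Sum.inl_ne_inr) (pderiv_X_self _) hgl]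
    exact isCoprime_prod_pow_derivation_korasRussellEquation _ hn (pderiv_X_self _)
      (fun i hi => pderiv_X_of_ne (Sum.inl_injective.ne hi)) hgj hψ
  finitePresentation := .quotient (Submodule.fg_span_singleton _)

/-- For a field `k`, `m ≥ 0`, a multi-index `n` with each `n i ≥ 2`, coprime
integers `r, s ≥ 2` and a polynomial `ψ ∈ k[u]` with `ψ(0) ≠ 0`, the generalized
Koras–Russell algebra
`R_m(n,ψ) = k[x_0,…,x_m,y,z,t]/(x^n z + y^r + t^s + x_0 ψ(x_0⋯x_m))`
is a smooth `k`-algebra (formally smooth and of finite presentation).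
Variables: `Sum.inl i = x_i`, `Sum.inr 0 = y`, `Sum.inr 1 = z`, `Sum.inr 2 = t`. -/
theorem generalized_koras_russell_algebra_smooth
    (k : Type*) [Field k] (m : ℕ) (n : Fin (m + 1) → ℕ) (hn : ∀ i, 2 ≤ n i)
    (r s : ℕ) (hr : 2 ≤ r) (hs : 2 ≤ s) (hrs : Nat.Coprime r s)
    (ψ : Polynomial k) (hψ : Polynomial.eval 0 ψ ≠ 0) :
    Algebra.FormallySmooth k
        (MvPolynomial (Fin (m + 1) ⊕ Fin 3) k ⧸
          Ideal.span
            {(∏ i : Fin (m + 1), (X (Sum.inl i) : MvPolynomial (Fin (m + 1) ⊕ Fin 3) k) ^ n i) *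
                X (Sum.inr 1) + X (Sum.inr 0) ^ r + X (Sum.inr 2) ^ s +
                X (Sum.inl 0) * Polynomial.aeval (∏ i : Fin (m + 1), X (Sum.inl i)) ψ}) ∧
      Algebra.FinitePresentation k
        (MvPolynomial (Fin (m + 1) ⊕ Fin 3) k ⧸
          Ideal.span
            {(∏ i : Fin (m + 1), (X (Sum.inl i) : MvPolynomial (Fin (m + 1) ⊕ Fin 3) k) ^ n i) *
                X (Sum.inr 1) + X (Sum.inr 0) ^ r + X (Sum.inr 2) ^ s +
                X (Sum.inl 0) * Polynomial.aeval (∏ i : Fin (m + 1), X (Sum.inl i)) ψ}) := by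
  have smooth := generalized_koras_russell_algebra_smooth_general 0 (1 : Fin 3) n
    (Nat.ne_of_gt (hn 0)) (X (Sum.inr 0) ^ r + X (Sum.inr 2) ^ s)
    (by simp [pderiv_X]) (by simp [pderiv_X]) ψ hψ.isUnit
  rw [korasRussellEquation, ← add_assoc] at smooth
  exact ⟨smooth.formallySmooth, smooth.finitePresentation⟩
end

section
/- Let k be a field, m ≥ 1 an integer, n_0,…,n_m integers with each n_i ≥ 2, and r,s ≥ 2 coprime integers. Let R_m = k[x_0,…,x_m,y,z,t]/(x_0^{n_0}⋯x_m^{n_m} z + y^r + t^s + x_0), and let R_{m−1} = k[x_0,…,x_{m−1},y,z,t]/(x_0^{n_0}⋯x_{m−1}^{n_{m−1}} z + y^r + t^s + x_0) be the analogous algebra for the truncated multi-index (n_0,…,n_{m−1}). Then the localization of R_m away from the image of x_m is isomorphic as a k-algebra to the localization of the polynomial ring R_{m−1}[X] away from X (that is, to R_{m−1}[X, X^{−1}]). Equivalently, the open complement of W_m = {x_m = 0} in Spec R_m is isomorphic to (Spec R_{m−1}) × G_m. -/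
open MvPolynomial

/-! In `R_m[x_m⁻¹]` the variable `z` may be traded for `Z = x_m^{n_m} z`, in terms of which the
defining relation is that of `R_{m-1}`, and `x_m` becomes a free invertible variable.

The same works for any ideal `I` of relations in variables `X_j` and any weights `w`: rewrite `I`
in terms of the products `x ^ w j * X_j`, for an extra variable `x`. Once `x` is inverted,
substituting `x ^ (-w j) * X_j` for `X_j` undoes the rewriting. -/

/-- The localization of `A ⧸ I` away from the image of `a : A`. -/
abbrev AwayQuotient {A : Type*} [CommRing A] (I : Ideal A) (a : A) : Type _ :=
  Localization.Away (Ideal.Quotient.mk I a)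

namespace AwayQuotient

variable {R A B : Type*} [CommRing R] [CommRing A] [CommRing B] [Algebra R A] [Algebra R B]
  {I : Ideal A} {a : A}

variable (R I a) in
/-- The canonical map from `A` to the localization of `A ⧸ I` away from `a`. -/
noncomputable def mk : A →ₐ[R] AwayQuotient I a :=
  (IsScalarTower.toAlgHom R (A ⧸ I) _).comp (Ideal.Quotient.mkₐ R I)

theorem mk_eq_zero {p : A} (hp : p ∈ I) : mk R I a p = 0 := by
  have hquot : Ideal.Quotient.mkₐ R I p = 0 := Ideal.Quotient.eq_zero_iff_mem.mpr hp
  rw [mk, AlgHom.comp_apply, hquot, map_zero]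

theorem isUnit_mk_self : IsUnit (mk R I a a) :=
  IsLocalization.Away.algebraMap_isUnit (Ideal.Quotient.mk I a)

theorem algHom_ext {f g : AwayQuotient I a →ₐ[R] B}
    (h : f.comp (mk R I a) = g.comp (mk R I a)) : f = g :=
  Localization.algHom_ext _ (Ideal.Quotient.algHom_ext R h)

/-- The homomorphism on the localization of `A ⧸ I` away from `a` induced by a homomorphism on `A`
that kills `I` and sends `a` to a unit. -/
noncomputable def lift (φ : A →ₐ[R] B) (hI : I ≤ RingHom.ker φ) (ha : IsUnit (φ a)) :
    AwayQuotient I a →ₐ[R] B :=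
  IsLocalization.Away.liftAlgHom (Ideal.Quotient.mk I a)
    (f := Ideal.Quotient.liftₐ I φ fun _ hp => hI hp) ha

theorem lift_mk (φ : A →ₐ[R] B) (hI : I ≤ RingHom.ker φ) (ha : IsUnit (φ a)) (p : A) :
    lift φ hI ha (mk R I a p) = φ p :=
  IsLocalization.Away.lift_eq (Ideal.Quotient.mk I a) ha (Ideal.Quotient.mk I p)

/-- The isomorphism `(A ⧸ I)[a⁻¹] ≃ (B ⧸ J)[b⁻¹]` induced by an isomorphism `A ≃ B` that takes
`I` to `J` and `a` to `b`. -/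
noncomputable def congr (e : A ≃ₐ[R] B) {J : Ideal B} (hIJ : J = I.map (e : A →+* B)) {b : B}
    (hab : e a = b) : AwayQuotient I a ≃ₐ[R] AwayQuotient J b :=
  IsLocalization.algEquivOfAlgEquiv (M := .powers (Ideal.Quotient.mk I a))
    (T := .powers (Ideal.Quotient.mk J b)) _ _ (Ideal.quotientEquivAlg I J e hIJ) <| by
      rw [Submonoid.map_powers, ← hab]
      rfl

end AwayQuotient

/-- The Laurent polynomial ring `Q[T, T⁻¹]`, realised as the localization of `Q[T]` away from `T`
rather than as Mathlib's `LaurentPolynomial Q`. -/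
abbrev LaurentAway (Q : Type*) [CommRing Q] : Type _ :=
  Localization.Away (Polynomial.X : Polynomial Q)

namespace LaurentAway

variable {R Q B : Type*} [CommRing R] [CommRing Q] [CommRing B] [Algebra R Q] [Algebra R B]

variable (R Q) in
/-- The inclusion of the constants into `Q[T, T⁻¹]`. -/
noncomputable def C : Q →ₐ[R] LaurentAway Q :=
  (IsScalarTower.toAlgHom R (Polynomial Q) _).comp Polynomial.CAlgHom

variable (Q) in
/-- The variable `T` of `Q[T, T⁻¹]`. -/
noncomputable def T : LaurentAway Q :=
  algebraMap (Polynomial Q) _ Polynomial.X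

variable (Q) in
/-- The inverse `T⁻¹` of the variable of `Q[T, T⁻¹]`. -/
noncomputable def invT : LaurentAway Q :=
  IsLocalization.Away.invSelf (Polynomial.X : Polynomial Q)

theorem T_mul_invT : T Q * invT Q = 1 :=
  IsLocalization.Away.mul_invSelf (Polynomial.X : Polynomial Q)

theorem isUnit_T : IsUnit (T Q) :=
  .of_mul_eq_one _ T_mul_invT

theorem algHom_ext {f g : LaurentAway Q →ₐ[R] B} (hC : f.comp (C R Q) = g.comp (C R Q))
    (hT : f (T Q) = g (T Q)) : f = g :=
  Localization.algHom_ext _ (Polynomial.algHom_ext' hC hT)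

/-- The homomorphism `Q[T, T⁻¹] → B` given by a homomorphism `Q → B` and a unit of `B`. -/
noncomputable def lift (φ : Q →ₐ[R] B) {b : B} (hb : IsUnit b) : LaurentAway Q →ₐ[R] B :=
  IsLocalization.Away.liftAlgHom (Polynomial.X : Polynomial Q)
    (f := Polynomial.eval₂AlgHom φ b fun _ => Commute.all _ _) (by simpa using hb)

theorem lift_C (φ : Q →ₐ[R] B) {b : B} (hb : IsUnit b) (q : Q) : lift φ hb (C R Q q) = φ q := by
  simp [lift, C]

theorem lift_T (φ : Q →ₐ[R] B) {b : B} (hb : IsUnit b) : lift φ hb (T Q) = b := by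
  simp [lift, T]

end LaurentAway

section ScaleVars

variable {R τ : Type*} [CommRing R]

/-- The substitution `X j ↦ x ^ w j * X j`, where `x = X none` is an additional variable. -/
noncomputable def scaleVars (w : τ → ℕ) : MvPolynomial τ R →ₐ[R] MvPolynomial (Option τ) R :=
  aeval fun j => X none ^ w j * X (some j)

@[simp]
theorem scaleVars_X (w : τ → ℕ) (j : τ) :
    scaleVars w (X j : MvPolynomial τ R) = X none ^ w j * X (some j) :=
  aeval_X _ j

variable (w : τ → ℕ) (I : Ideal (MvPolynomial τ R))

/-- The substitution `x ↦ T`, `X j ↦ T ^ (-w j) * X j`, with values in the Laurent polynomials over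
the quotient by `I`. -/
noncomputable def unscaleVars :
    MvPolynomial (Option τ) R →ₐ[R] LaurentAway (MvPolynomial τ R ⧸ I) :=
  aeval fun o => o.elim (LaurentAway.T _) fun j =>
    LaurentAway.invT _ ^ w j * LaurentAway.C R _ (Ideal.Quotient.mk I (X j))

@[simp]
theorem unscaleVars_X_none : unscaleVars w I (X none) = LaurentAway.T _ :=
  aeval_X _ none

@[simp]
theorem unscaleVars_X_some (j : τ) :
    unscaleVars w I (X (some j)) =
      LaurentAway.invT _ ^ w j * LaurentAway.C R _ (Ideal.Quotient.mk I (X j)) :=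
  aeval_X _ (some j)

theorem unscaleVars_comp_scaleVars :
    (unscaleVars w I).comp (scaleVars w) = (LaurentAway.C R _).comp (Ideal.Quotient.mkₐ R I) := by
  ext j
  simp [← mul_assoc, ← mul_pow, LaurentAway.T_mul_invT]

theorem unscaleVars_scaleVars (p : MvPolynomial τ R) :
    unscaleVars w I (scaleVars w p) = LaurentAway.C R _ (Ideal.Quotient.mk I p) :=
  DFunLike.congr_fun (unscaleVars_comp_scaleVars w I) p

theorem map_scaleVars_le_ker_unscaleVars :
    I.map (scaleVars w) ≤ RingHom.ker (unscaleVars w I) := by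
  refine Ideal.map_le_iff_le_comap.mpr fun p hp => ?_
  rw [Ideal.mem_comap, RingHom.mem_ker, unscaleVars_scaleVars,
    Ideal.Quotient.eq_zero_iff_mem.mpr hp, map_zero]

/-- The map induced by `unscaleVars` on the localization of the rescaled quotient. -/
noncomputable def awayScaledToLaurent :
    AwayQuotient (I.map (scaleVars w)) (X none) →ₐ[R] LaurentAway (MvPolynomial τ R ⧸ I) :=
  AwayQuotient.lift (unscaleVars w I) (map_scaleVars_le_ker_unscaleVars w I)
    ((unscaleVars_X_none w I).symm ▸ LaurentAway.isUnit_T)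

/-- The map induced by `scaleVars` on the Laurent polynomials over the quotient by `I`. -/
noncomputable def laurentToAwayScaled :
    LaurentAway (MvPolynomial τ R ⧸ I) →ₐ[R] AwayQuotient (I.map (scaleVars w)) (X none) :=
  LaurentAway.lift
    (Ideal.Quotient.liftₐ I ((AwayQuotient.mk R _ _).comp (scaleVars w)) fun _ hp =>
      AwayQuotient.mk_eq_zero (R := R) (Ideal.mem_map_of_mem (scaleVars w) hp))
    (AwayQuotient.isUnit_mk_self (R := R))

theorem awayScaledToLaurent_mk (p : MvPolynomial (Option τ) R) :
    awayScaledToLaurent w I (AwayQuotient.mk R _ _ p) = unscaleVars w I p :=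
  AwayQuotient.lift_mk _ _ _ p

theorem laurentToAwayScaled_C_mk (p : MvPolynomial τ R) :
    laurentToAwayScaled w I (LaurentAway.C R _ (Ideal.Quotient.mk I p)) =
      AwayQuotient.mk R _ _ (scaleVars w p) :=
  LaurentAway.lift_C _ _ _

theorem laurentToAwayScaled_T :
    laurentToAwayScaled w I (LaurentAway.T _) = AwayQuotient.mk R _ _ (X none) :=
  LaurentAway.lift_T _ _

theorem mk_X_none_mul_laurentToAwayScaled_invT :
    AwayQuotient.mk R (I.map (scaleVars w)) (X none) (X none) *
      laurentToAwayScaled w I (LaurentAway.invT _) = 1 := by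
  rw [← laurentToAwayScaled_T, ← map_mul, LaurentAway.T_mul_invT, map_one]

theorem awayScaledToLaurent_comp_laurentToAwayScaled :
    (awayScaledToLaurent w I).comp (laurentToAwayScaled w I) = AlgHom.id R _ := by
  refine LaurentAway.algHom_ext (Ideal.Quotient.algHom_ext R (AlgHom.ext fun p => ?_)) ?_
  · change awayScaledToLaurent w I
      (laurentToAwayScaled w I (LaurentAway.C R _ (Ideal.Quotient.mk I p))) = _
    rw [laurentToAwayScaled_C_mk, awayScaledToLaurent_mk, unscaleVars_scaleVars]
    rfl
  · simp [laurentToAwayScaled_T, awayScaledToLaurent_mk]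

theorem laurentToAwayScaled_comp_awayScaledToLaurent :
    (laurentToAwayScaled w I).comp (awayScaledToLaurent w I) = AlgHom.id R _ := by
  refine AwayQuotient.algHom_ext (MvPolynomial.algHom_ext ?_)
  rintro (_ | j)
  · simp [awayScaledToLaurent_mk, laurentToAwayScaled_T]
  · have hinv := congrArg (· ^ w j) (mk_X_none_mul_laurentToAwayScaled_invT w I)
    simp only [mul_pow, one_pow] at hinv
    simp only [AlgHom.comp_apply, AlgHom.id_apply, awayScaledToLaurent_mk, unscaleVars_X_some,
      map_mul, map_pow, laurentToAwayScaled_C_mk, scaleVars_X]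
    linear_combination AwayQuotient.mk R _ _ (X (some j)) * hinv

/-- Rewriting an ideal `I` of relations in terms of the products `x ^ w j * X j` does not change
the quotient once `x` is inverted, apart from adjoining `x` and `x⁻¹`. -/
noncomputable def awayScaledEquivLaurent :
    AwayQuotient (I.map (scaleVars w)) (X none) ≃ₐ[R] LaurentAway (MvPolynomial τ R ⧸ I) :=
  AlgEquiv.ofAlgHom _ _ (awayScaledToLaurent_comp_laurentToAwayScaled w I)
    (laurentToAwayScaled_comp_awayScaledToLaurent w I)

end ScaleVars

section KorasRussell

/-- The reindexing of variables that puts `x_m`, among `x_0, …, x_m` and variables indexed by `ι`,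
in the role of `none`. -/
def optionSumEquivLast (m : ℕ) (ι : Type*) : Option (Fin m ⊕ ι) ≃ Fin (m + 1) ⊕ ι where
  toFun o := o.elim (Sum.inl (Fin.last m)) (Sum.map Fin.castSucc id)
  invFun := Sum.elim (Fin.lastCases none fun i => some (Sum.inl i)) fun j => some (Sum.inr j)
  left_inv := by rintro (_ | _ | _) <;> simp
  right_inv := by
    rintro (i | _)
    · cases i using Fin.lastCases <;> simp
    · simp

variable {m : ℕ} (R : Type*) [CommRing R]

/-- The polynomial `x_0^{n_0} ⋯ x_m^{n_m} z + y^r + t^s + x_0` defining the generalized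
Koras–Russell algebra `R_m`, with `x_i = X (inl i)` and `y, z, t = X (inr 0), X (inr 1), X (inr 2)`.
-/
noncomputable def korasRussellPoly (n : Fin (m + 1) → ℕ) (r s : ℕ) :
    MvPolynomial (Fin (m + 1) ⊕ Fin 3) R :=
  (∏ i, X (Sum.inl i) ^ n i) * X (Sum.inr 1) + X (Sum.inr 0) ^ r + X (Sum.inr 2) ^ s + X (Sum.inl 0)

/-- The weights of the substitution `z ↦ x^e z`, which leaves `x_0, …, x_m, y, t` alone. -/
def zWeight (m e : ℕ) : Fin (m + 1) ⊕ Fin 3 → ℕ :=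
  Sum.elim 0 (Pi.single 1 e)

theorem renameEquiv_scaleVars_korasRussellPoly (n : Fin (m + 2) → ℕ) (r s : ℕ) :
    renameEquiv R (optionSumEquivLast (m + 1) (Fin 3))
        (scaleVars (zWeight m (n (Fin.last (m + 1))))
          (korasRussellPoly R (fun i => n i.castSucc) r s)) =
      korasRussellPoly R n r s := by
  simp only [korasRussellPoly, Fin.prod_univ_castSucc (n := m + 1)]
  simp [optionSumEquivLast, zWeight, mul_assoc]

theorem span_korasRussellPoly_eq_map (n : Fin (m + 2) → ℕ) (r s : ℕ) :
    Ideal.span {korasRussellPoly R n r s} =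
      ((Ideal.span {korasRussellPoly R (fun i => n i.castSucc) r s}).map
        (scaleVars (zWeight m (n (Fin.last (m + 1)))))).map
          (renameEquiv R (optionSumEquivLast (m + 1) (Fin 3)) : _ →+* _) := by
  rw [Ideal.map_span, Ideal.map_span, Set.image_singleton, Set.image_singleton,
    ← renameEquiv_scaleVars_korasRussellPoly R n r s]
  rfl

theorem generalized_koras_russell_localization_away_last_variable_general
    (n : Fin (m + 2) → ℕ) (r s : ℕ) :
    Nonempty
      (AwayQuotient (Ideal.span {korasRussellPoly R n r s}) (X (Sum.inl (Fin.last (m + 1)))) ≃ₐ[R]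
        LaurentAway (MvPolynomial (Fin (m + 1) ⊕ Fin 3) R ⧸
          Ideal.span {korasRussellPoly R (fun i => n i.castSucc) r s})) := by
  have hvar : renameEquiv R (optionSumEquivLast (m + 1) (Fin 3)) (X none) =
      X (Sum.inl (Fin.last (m + 1))) := rename_X _ _
  exact ⟨(AwayQuotient.congr _ (span_korasRussellPoly_eq_map R n r s) hvar).symm.trans
    (awayScaledEquivLaurent _ _)⟩

end KorasRussell

/-- For a field `k`, an integer `m ≥ 1` (written `m + 1` below), a multi-index
`n` with each `n i ≥ 2` and coprime integers `r, s ≥ 2`, the localization of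
`R_m = k[x_0,…,x_m,y,z,t]/(∏ x_i^{n i} · z + y^r + t^s + x_0)` away from the
image of the last variable `x_m` is isomorphic as a `k`-algebra to
`R_{m−1}[X, X⁻¹]`, the localization of the polynomial ring `R_{m−1}[X]` away
from `X`, where `R_{m−1}` is the analogous algebra for the truncated multi-index.
Variables: `Sum.inl i = x_i`, `Sum.inr 0 = y`, `Sum.inr 1 = z`, `Sum.inr 2 = t`. -/
theorem generalized_koras_russell_localization_away_last_variable
    (k : Type*) [Field k] (m : ℕ) (n : Fin (m + 2) → ℕ) (hn : ∀ i, 2 ≤ n i)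
    (r s : ℕ) (hr : 2 ≤ r) (hs : 2 ≤ s) (hrs : Nat.Coprime r s) :
    Nonempty
      (Localization.Away
          (Ideal.Quotient.mk
            (Ideal.span
              {(∏ i : Fin (m + 2), (X (Sum.inl i) : MvPolynomial (Fin (m + 2) ⊕ Fin 3) k) ^ n i) *
                  X (Sum.inr 1) + X (Sum.inr 0) ^ r + X (Sum.inr 2) ^ s + X (Sum.inl 0)})
            (X (Sum.inl (Fin.last (m + 1)))))
        ≃ₐ[k]
        Localization.Away
          (Polynomial.X :
            Polynomial
              (MvPolynomial (Fin (m + 1) ⊕ Fin 3) k ⧸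
                Ideal.span
                  {(∏ i : Fin (m + 1),
                      (X (Sum.inl i) : MvPolynomial (Fin (m + 1) ⊕ Fin 3) k) ^ n i.castSucc) *
                      X (Sum.inr 1) + X (Sum.inr 0) ^ r + X (Sum.inr 2) ^ s + X (Sum.inl 0)}))) :=
  generalized_koras_russell_localization_away_last_variable_general k n r s
end

section
/- Let k be a field and let r,s ≥ 2 be coprime integers. Then for every integer n ≥ 1 there exist polynomials f, g ∈ k[w] such that w^n divides f(w)^r + g(w)^s + w in the polynomial ring k[w]. -/
/-!
In any commutative ring, `y ^ r - z ^ s = x` is solvable for nilpotent `x`: if `u r + v s = 1`, the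
polynomial `(1 + u T) ^ r - (1 - v T) ^ s - x` has value `-x` and derivative `1` at `T = 0`, so
Newton iteration yields a root. As `r` or `s` is odd, a change of sign turns the difference of powers
into a sum. In `ℤ[w] / (w ^ n)`, where `w` is nilpotent, this gives `f` and `g` with integer
coefficients, which therefore work over every ring.
-/

open Polynomial

section CommRing

variable {A : Type*} [CommRing A] {r s : ℕ} {x : A}

theorem exists_pow_sub_pow_eq_of_isNilpotent (hrs : r.Coprime s) (hx : IsNilpotent x) :
    ∃ y z : A, y ^ r - z ^ s = x := by
  obtain ⟨u, v, huv⟩ : IsCoprime (r : A) (s : A) := hrs.cast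
  let P : A[X] := (1 + C u * X) ^ r - (1 - C v * X) ^ s - C x
  have value_zero : aeval (0 : A) P = -x := by simp [P]
  have derivative_zero : aeval (0 : A) (derivative P) = 1 := by
    simpa [P, derivative_pow, mul_comm (r : A), mul_comm (s : A)] using huv
  obtain ⟨t, ⟨-, root⟩, -⟩ := existsUnique_nilpotent_sub_and_aeval_eq_zero
    (value_zero ▸ hx.neg) (derivative_zero ▸ isUnit_one)
  exact ⟨1 + u * t, 1 - v * t, by simpa [P, sub_eq_zero] using root⟩

theorem exists_pow_add_pow_eq_of_isNilpotent (hrs : r.Coprime s) (hx : IsNilpotent x) :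
    ∃ y z : A, y ^ r + z ^ s = x := by
  wlog hs : Odd s generalizing r s
  · have two_dvd_s : 2 ∣ s := (Nat.not_odd_iff_even.1 hs).two_dvd
    have hr : Odd r := (hrs.coprime_dvd_right two_dvd_s).odd_of_right
    obtain ⟨z, y, h⟩ := this hrs.symm hr
    exact ⟨y, z, by rwa [add_comm]⟩
  obtain ⟨y, z, h⟩ := exists_pow_sub_pow_eq_of_isNilpotent hrs hx
  exact ⟨y, -z, by rwa [hs.neg_pow, ← sub_eq_add_neg]⟩

theorem exists_pow_dvd_pow_add_pow_add (x : A) (hrs : r.Coprime s) (n : ℕ) :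
    ∃ y z : A, x ^ n ∣ y ^ r + z ^ s + x := by
  let π := Ideal.Quotient.mk (Ideal.span {x ^ n})
  have nilpotent : IsNilpotent (π x) :=
    ⟨n, by rw [← map_pow, Ideal.Quotient.eq_zero_iff_dvd]⟩
  obtain ⟨y', z', h⟩ := exists_pow_add_pow_eq_of_isNilpotent hrs nilpotent.neg
  obtain ⟨y, rfl⟩ := Ideal.Quotient.mk_surjective y'
  obtain ⟨z, rfl⟩ := Ideal.Quotient.mk_surjective z'
  refine ⟨y, z, (Ideal.Quotient.eq_zero_iff_dvd _ _).1 ?_⟩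
  simpa only [map_add, map_pow] using eq_neg_iff_add_eq_zero.1 h

end CommRing

theorem exists_polynomials_pow_dvd_general (R : Type*) [Ring R] {r s : ℕ} (hrs : r.Coprime s)
    (n : ℕ) : ∃ f g : R[X], X ^ n ∣ f ^ r + g ^ s + X := by
  obtain ⟨f, g, h⟩ := exists_pow_dvd_pow_add_pow_add (X : ℤ[X]) hrs n
  let φ := mapRingHom (Int.castRingHom R)
  exact ⟨φ f, φ g, by simpa [φ] using map_dvd φ h⟩

/-- For a field `k` and coprime integers `r, s ≥ 2`, for every `n ≥ 1` there
exist polynomials `f, g ∈ k[w]` such that `w^n` divides `f^r + g^s + w`. -/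
theorem exists_polynomials_pow_dvd
    (k : Type*) [Field k] (r s : ℕ) (hr : 2 ≤ r) (hs : 2 ≤ s) (hrs : Nat.Coprime r s) :
    ∀ n : ℕ, 1 ≤ n →
      ∃ f g : Polynomial k, (Polynomial.X : Polynomial k) ^ n ∣ f ^ r + g ^ s + Polynomial.X := by
  intro n _
  exact exists_polynomials_pow_dvd_general k hrs n
end
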